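/- Let S be a maximal cap in AG(4,3) and let Π be a cap-partition of AG(4,3) containing S. Among the three caps of Π other than S, exactly two lie in exactly six cap-partitions containing S, and the remaining one lies in exactly one or exactly two cap-partitions containing S. (Every cap-partition containing S has two S-6-completable caps and either an S-1-completable or an S-2-completable cap.) -/

import Mathlib

/-- A cap in `AG(n,3)`: a finite set of points of `Fin n → ZMod 3` containing no
three distinct collinear points (three distinct points are collinear iff they sum to zero). -/
def IsCap {n : ℕ} (C : Finset (Fin n → ZMod 3)) : Prop :=
  ∀ x ∈ C, ∀ y ∈ C, ∀ z ∈ C, x ≠ y → x ≠ z → y ≠ z → x + y + z ≠ 0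

/-- A maximal cap: a cap of largest possible size. -/
def MaximalCap {n : ℕ} (C : Finset (Fin n → ZMod 3)) : Prop :=
  IsCap C ∧ ∀ D : Finset (Fin n → ZMod 3), IsCap D → D.card ≤ C.card

/-- A cap-partition of `AG(4,3)`: an unordered set of four pairwise disjoint maximal caps
whose union is the complement of a single point. -/
def IsCapPartition (P : Finset (Finset (Fin 4 → ZMod 3))) : Prop :=
  P.card = 4 ∧ (∀ C ∈ P, MaximalCap C) ∧
  (∀ C ∈ P, ∀ D ∈ P, C ≠ D → Disjoint C D) ∧
  ∃ a : Fin 4 → ZMod 3, P.sup id = Finset.univ \ {a}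

/-!
A cap in `AG(4,3)` has at most `20` points. Among the midpoints of the pairs of points of a
`20`-cap, which all lie outside it, some point `q` occurs for more than three pairs. With `q` as
the origin, the cap contains four antipodal pairs, so in suitable coordinates it contains one of
two sets of nine points. A search for the extensions of these sets shows that every `20`-cap is
affinely equivalent to `quadricCap`, the cone over an elliptic quadric of `PG(3,3)` without its
vertex.

Counting points in the hyperplanes of a parallel class modulo `9` shows that the four caps of a
cap-partition share the point they miss as their vertex. For partitions containing `quadricCap`,
this leaves `198` candidates for the other caps. In the graph joining disjoint candidates, every
edge extends to a triangle, that is, to a cap-partition. Three caps of a cap-partition determine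
the fourth, so each candidate lies in half as many cap-partitions as its degree, which is `12`,
`4` or `2`. Every triangle has degrees `12`, `12`, `4` or `12`, `12`, `2`, as its degree sum is
`26` or `28`.
-/

section Cap

variable {n : ℕ} {C D : Finset (Fin n → ZMod 3)} {x y : Fin n → ZMod 3}

theorem neg_add_eq_left_iff : -(x + y) = x ↔ x = y := by
  have h3 : ∀ a b : ZMod 3, -(a + b) = a ↔ a = b := by decide
  simp only [funext_iff, Pi.neg_apply, Pi.add_apply, h3]

theorem isCap_iff_neg_add_notMem :
    IsCap C ↔ ∀ x ∈ C, ∀ y ∈ C, x ≠ y → -(x + y) ∉ C := by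
  constructor
  · intro hC x hx y hy hxy hz
    refine hC x hx y hy _ hz hxy (fun h ↦ hxy ?_) (fun h ↦ hxy ?_) (add_neg_cancel _)
    · exact neg_add_eq_left_iff.1 h.symm
    · exact (neg_add_eq_left_iff.1 (add_comm x y ▸ h.symm)).symm
  · intro hC x hx y hy z hz hxy _ _ hsum
    exact hC x hx y hy hxy (eq_neg_of_add_eq_zero_right hsum ▸ hz)

theorem IsCap.neg_add_notMem (hC : IsCap C) (hx : x ∈ C) (hy : y ∈ C) (hxy : x ≠ y) :
    -(x + y) ∉ C :=
  isCap_iff_neg_add_notMem.1 hC x hx y hy hxy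

theorem IsCap.subset (hD : IsCap D) (hCD : C ⊆ D) : IsCap C :=
  fun x hx y hy z hz ↦ hD x (hCD hx) y (hCD hy) z (hCD hz)

theorem maximalCap_iff_of_card_le {k : ℕ} (hC : IsCap C) (hk : C.card = k)
    (hle : ∀ E : Finset (Fin n → ZMod 3), IsCap E → E.card ≤ k) :
    MaximalCap D ↔ IsCap D ∧ D.card = k :=
  ⟨fun hD ↦ ⟨hD.1, (hle D hD.1).antisymm (hk ▸ hD.2 C hC)⟩,
    fun hD ↦ ⟨hD.1, fun _ hE ↦ (hle _ hE).trans_eq hD.2.symm⟩⟩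

theorem add_add_map_eq_zero_iff (f : (Fin n → ZMod 3) ≃ᵃ[ZMod 3] (Fin n → ZMod 3))
    (x y z : Fin n → ZMod 3) : f x + f y + f z = 0 ↔ x + y + z = 0 := by
  have hf (x : Fin n → ZMod 3) : f x = f.linear x + f 0 := by
    simpa using f.map_vadd 0 x
  have h3 : f 0 + f 0 + f 0 = 0 := by
    ext i
    exact (by decide : ∀ a : ZMod 3, a + a + a = 0) _
  calc f x + f y + f z = 0 ↔ f.linear (x + y + z) + (f 0 + f 0 + f 0) = 0 := by
        rw [hf x, hf y, hf z, map_add, map_add]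
        abel_nf
    _ ↔ x + y + z = 0 := by rw [h3, add_zero, LinearEquiv.map_eq_zero_iff]

theorem isCap_finsetCongr_iff (f : (Fin n → ZMod 3) ≃ᵃ[ZMod 3] (Fin n → ZMod 3)) :
    IsCap (f.toEquiv.finsetCongr C) ↔ IsCap C := by
  simp only [IsCap, Equiv.finsetCongr_apply, Finset.forall_mem_map, Equiv.coe_toEmbedding,
    AffineEquiv.coe_toEquiv, f.injective.ne_iff, ne_eq, add_add_map_eq_zero_iff]

theorem maximalCap_finsetCongr_iff (f : (Fin n → ZMod 3) ≃ᵃ[ZMod 3] (Fin n → ZMod 3)) :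
    MaximalCap (f.toEquiv.finsetCongr C) ↔ MaximalCap C := by
  rw [MaximalCap, isCap_finsetCongr_iff, Equiv.finsetCongr_apply, Finset.card_map, MaximalCap]

end Cap

section Masks

/-- The ambient space `AG(4,3)`. -/
abbrev Point : Type := Fin 4 → ZMod 3

/-- The bit position assigned to a point in a bit mask. Digits in base `6` make the sum of two
codes free of carries; the factor `7` spaces the bits so that counting them is reduction modulo
`2 ^ 7 - 1`. -/
def code (x : Point) : ℕ := 7 * ((x 0).val + 6 * (x 1).val + 36 * (x 2).val + 216 * (x 3).val)

/-- The bit mask encoding a set of points. -/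
def mask (A : Finset Point) : ℕ := ∑ x ∈ A, 2 ^ code x

variable {A B : Finset Point} {x y z : Point}

theorem code_injective : Function.Injective code := by
  intro x y hxy
  have hx (i : Fin 4) := ZMod.val_lt (x i)
  have hy (i : Fin 4) := ZMod.val_lt (y i)
  have h0 := hx 0; have h1 := hx 1; have h2 := hx 2
  have k0 := hy 0; have k1 := hy 1; have k2 := hy 2
  unfold code at hxy
  funext i
  apply ZMod.val_injective
  fin_cases i <;> simp only [Fin.zero_eta, Fin.mk_one, Fin.reduceFinMk] <;> omega

theorem testBit_mask {i : ℕ} : (mask A).testBit i ↔ ∃ x ∈ A, code x = i := by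
  rw [mask, ← Finset.sum_image (f := fun i ↦ 2 ^ i) code_injective.injOn, ← Nat.mem_bitIndices,
    ← List.mem_toFinset, Finset.toFinset_bitIndices_sum_two_pow, Finset.mem_image]

theorem testBit_mask_code : (mask A).testBit (code x) ↔ x ∈ A := by
  simp only [testBit_mask, code_injective.eq_iff, exists_eq_right]

theorem mask_injective : Function.Injective mask := fun A B h ↦ by
  ext x
  rw [← testBit_mask_code, h, testBit_mask_code]

theorem mask_mod_eq_card (A : Finset Point) : mask A % 127 = A.card := by
  have hpow (x : Point) : 2 ^ code x ≡ 1 [MOD 127] := by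
    have h : 2 ^ 7 ≡ 1 [MOD 127] := rfl
    simpa only [code, pow_mul, one_pow] using h.pow _
  have hcard : A.card < 127 := A.card_le_univ.trans_lt (by simp [ZMod.card])
  have hsum : mask A ≡ A.card [MOD 127] := by
    rw [mask, Finset.card_eq_sum_ones]
    exact Nat.ModEq.sum fun x _ ↦ hpow x
  exact Nat.mod_eq_of_modEq hsum hcard

theorem mask_and_eq_zero_iff : mask A &&& mask B = 0 ↔ Disjoint A B := by
  rw [Finset.disjoint_left]
  constructor
  · intro h x hA hB
    simpa [testBit_mask_code.2 hA, testBit_mask_code.2 hB] using congrArg (·.testBit (code x)) h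
  · intro h
    refine Nat.zero_of_testBit_eq_false fun i ↦ Bool.eq_false_iff.2 fun hi ↦ ?_
    rw [Nat.testBit_and, Bool.and_eq_true, testBit_mask] at hi
    obtain ⟨⟨x, hA, rfl⟩, hB⟩ := hi
    exact h hA (testBit_mask_code.1 hB)

theorem mask_or_two_pow (A : Finset Point) (x : Point) :
    mask A ||| 2 ^ code x = mask (insert x A) := by
  apply Nat.eq_of_testBit_eq
  intro i
  rw [Bool.eq_iff_iff, Nat.testBit_or, Bool.or_eq_true, Nat.testBit_two_pow, testBit_mask,
    testBit_mask, Finset.exists_mem_insert, decide_eq_true_eq, or_comm]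

theorem mask_xor_and (A : Finset Point) (m : ℕ) :
    mask A ^^^ (mask A &&& m) = mask (A.filter fun x ↦ ¬ m.testBit (code x)) := by
  apply Nat.eq_of_testBit_eq
  intro i
  rw [Bool.eq_iff_iff, Nat.testBit_xor, Nat.testBit_and, testBit_mask]
  simp only [Finset.mem_filter, and_assoc]
  constructor
  · intro h
    obtain ⟨x, hx, rfl⟩ : ∃ x ∈ A, code x = i := testBit_mask.1 (by grind)
    exact ⟨x, hx, by grind, rfl⟩
  · rintro ⟨x, hx, hm, rfl⟩
    have := testBit_mask_code.2 hx
    grind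

/-- The union of the translates of the mask `m` by `w * s`, over the two digits `s < 6` congruent to
`-c` modulo `3`. -/
def widen (w : ℕ) (c : ZMod 3) (m : ℕ) : ℕ :=
  m <<< (w * (-c).val) ||| m <<< (w * ((-c).val + 3))

/-- The mask with bit `code x + code y` set exactly when `x`, `y`, `z` sum to zero. -/
def sumMask (z : Point) : ℕ := widen 7 (z 0) (widen 42 (z 1) (widen 252 (z 2) (widen 1512 (z 3) 1)))

theorem testBit_widen {w m i : ℕ} {c : ZMod 3} :
    (widen w c m).testBit i ↔
      ∃ s : ℕ, s < 6 ∧ (s : ZMod 3) = -c ∧ w * s ≤ i ∧ m.testBit (i - w * s) := by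
  have hs : ∀ (c : ZMod 3) (s : ℕ), s < 6 →
      ((s : ZMod 3) = -c ↔ s = (-c).val ∨ s = (-c).val + 3) := by
    decide
  have hlt := ZMod.val_lt (-c)
  simp only [widen, Nat.testBit_or, Nat.testBit_shiftLeft, Bool.or_eq_true, Bool.and_eq_true,
    decide_eq_true_eq]
  constructor
  · rintro (h | h)
    · exact ⟨_, by omega, (hs c _ (by omega)).2 (.inl rfl), h⟩
    · exact ⟨_, by omega, (hs c _ (by omega)).2 (.inr rfl), h⟩
  · rintro ⟨s, hs6, hsc, h⟩
    rcases (hs c s hs6).1 hsc with rfl | rfl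
    exacts [.inl h, .inr h]

theorem testBit_sumMask : (sumMask z).testBit (code x + code y) ↔ x + y + z = 0 := by
  have hlt (k : Fin 4) : (x k).val + (y k).val < 6 := by
    have := ZMod.val_lt (x k); have := ZMod.val_lt (y k); omega
  have hcast (k : Fin 4) : (((x k).val + (y k).val : ℕ) : ZMod 3) = -z k ↔ x k + y k + z k = 0 := by
    simp [eq_neg_iff_add_eq_zero]
  have h0 := hlt 0; have h1 := hlt 1; have h2 := hlt 2; have h3 := hlt 3
  simp only [sumMask, testBit_widen, Nat.testBit_one_eq_true_iff_self_eq_zero, funext_iff,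
    Fin.forall_fin_succ, Pi.add_apply, Pi.zero_apply, ← hcast, code]
  constructor
  · rintro ⟨s₀, l₀, e₀, b₀, s₁, l₁, e₁, b₁, s₂, l₂, e₂, b₂, s₃, l₃, e₃, b₃, h⟩
    obtain rfl : s₀ = (x 0).val + (y 0).val := by omega
    obtain rfl : s₁ = (x 1).val + (y 1).val := by omega
    obtain rfl : s₂ = (x 2).val + (y 2).val := by omega
    obtain rfl : s₃ = (x 3).val + (y 3).val := by omega
    exact ⟨e₀, e₁, e₂, e₃, nofun⟩
  · rintro ⟨e₀, e₁, e₂, e₃, -⟩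
    exact ⟨_, h0, e₀, by omega, _, h1, e₁, by omega, _, h2, e₂, by omega, _, h3, e₃, by omega,
      by omega⟩

end Masks

section Search

/-- `force n f` is `f n`, set up so that the kernel evaluates `n` to a numeral before entering
`f`. -/
def force {α : Type} (n : ℕ) (f : ℕ → α) : α :=
  -- The kernel hashes a numeral by its low 64 bits, where many masks agree; the salt in the low
  -- bits of the scrutinee keeps its caches from degenerating.
  Nat.casesOn (2 ^ 64 * n + n % (2 ^ 61 - 1)) (f 0) fun k ↦ f ((k + 1) >>> 64)

theorem force_eq {α : Type} (n : ℕ) (f : ℕ → α) : force n f = f n := by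
  have hn : (2 ^ 64 * n + n % (2 ^ 61 - 1)) >>> 64 = n := by
    rw [Nat.shiftRight_eq_div_pow]
    omega
  change Nat.rec (f 0) (fun k _ ↦ f ((k + 1) >>> 64)) (2 ^ 64 * n + n % (2 ^ 61 - 1)) = f n
  generalize 2 ^ 64 * n + n % (2 ^ 61 - 1) = m at hn
  cases m <;> exact congrArg f hn

/-- A node of the search for caps, in bit masks: the points still available, the sums
`code x + code y` of the pairs `x`, `y` collinear with a chosen point, and the chosen points. -/
structure SearchState where
  free : ℕ
  sums : ℕ
  chosen : ℕ

namespace SearchState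

variable {α : Type}

/-- Choose the point `x`, discard `x` and the third points of the lines joining it to chosen
points, and continue with `k`. -/
def choose (x : Point) (k : SearchState → α) (s : SearchState) : α :=
  force (s.sums ||| sumMask x) fun sums ↦
    force (s.free ^^^ (s.free &&& sums >>> code x)) fun free ↦
      force (s.chosen ||| 2 ^ code x) fun chosen ↦ k ⟨free, sums, chosen⟩

/-- Make the points of `B` unavailable, and continue with `k`. -/
def discard (B : Finset Point) (k : SearchState → α) (s : SearchState) : α :=
  force (s.free ^^^ (s.free &&& mask B)) fun free ↦ k ⟨free, s.sums, s.chosen⟩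

/-- The state `s` describes the stage of the search for the cap `T` where `D` has been chosen and
`F` is available. -/
structure IsStage (T D F : Finset Point) (s : SearchState) : Prop where
  chosen_subset : D ⊆ T
  sdiff_subset : T \ D ⊆ F
  free_eq : s.free = mask F
  chosen_eq : s.chosen = mask D
  exists_of_testBit_sums : ∀ x y, s.sums.testBit (code x + code y) → ∃ z ∈ D, x + y + z = 0

namespace IsStage

variable {T D F : Finset Point} {s : SearchState} {x : Point}

theorem card_le (h : s.IsStage T D F) : T.card ≤ s.free % 127 + s.chosen % 127 := by
  rw [h.free_eq, h.chosen_eq, mask_mod_eq_card, mask_mod_eq_card,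
    ← Finset.card_sdiff_add_card_eq_card h.chosen_subset]
  exact Nat.add_le_add_right (Finset.card_le_card h.sdiff_subset) _

theorem exists_choose_eq (h : s.IsStage T D F) (hT : IsCap T) (hx : x ∈ T) (k : SearchState → α) :
    ∃ s' F', s'.IsStage T (insert x D) F' ∧ s.choose x k = k s' := by
  have hsums : ∀ y z, (s.sums ||| sumMask x).testBit (code y + code z) →
      ∃ w ∈ insert x D, y + z + w = 0 := by
    intro y z hyz
    rw [Nat.testBit_or, Bool.or_eq_true, testBit_sumMask] at hyz
    rw [Finset.exists_mem_insert, or_comm]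
    exact hyz.imp_left (h.exists_of_testBit_sums y z)
  refine ⟨⟨_, _, _⟩, F.filter fun y ↦ ¬((s.sums ||| sumMask x) >>> code x).testBit (code y),
    ⟨Finset.insert_subset hx h.chosen_subset, fun y hy ↦ ?_, ?_, ?_, hsums⟩,
    (force_eq _ _).trans <| (force_eq _ _).trans (force_eq _ _)⟩
  · obtain ⟨hyT, hyD⟩ := Finset.mem_sdiff.1 hy
    refine Finset.mem_filter.2 ⟨h.sdiff_subset ?_, fun hbit ↦ ?_⟩
    · exact Finset.mem_sdiff.2 ⟨hyT, mt Finset.mem_insert_of_mem hyD⟩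
    obtain ⟨z, hz, hsum⟩ := hsums x y (Nat.testBit_shiftRight .. ▸ hbit)
    refine hT.neg_add_notMem hyT (Finset.insert_subset hx h.chosen_subset hz)
      (ne_of_mem_of_not_mem hz hyD).symm ?_
    rwa [← eq_neg_of_add_eq_zero_left (add_assoc x y z ▸ hsum)]
  · rw [h.free_eq, mask_xor_and]
  · rw [h.chosen_eq, mask_or_two_pow]

theorem exists_foldr_choose_eq (h : s.IsStage T D F) (hT : IsCap T) {B : List Point}
    (hB : ∀ x ∈ B, x ∈ T) (k : SearchState → α) :
    ∃ s' F', s'.IsStage T (D ∪ B.toFinset) F' ∧ B.foldr choose k s = k s' := by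
  induction B generalizing s D F with
  | nil => exact ⟨s, F, by simpa using h, rfl⟩
  | cons x B ih =>
    obtain ⟨hx, hB⟩ := List.forall_mem_cons.1 hB
    obtain ⟨s₁, F₁, h₁, e₁⟩ := h.exists_choose_eq hT hx (B.foldr choose k)
    obtain ⟨s₂, F₂, h₂, e₂⟩ := ih h₁ hB
    exact ⟨s₂, F₂, by simpa [Finset.insert_union] using h₂, e₁.trans e₂⟩

theorem exists_discard_eq (h : s.IsStage T D F) {B : Finset Point} (hB : Disjoint B T)
    (k : SearchState → α) : ∃ s' F', s'.IsStage T D F' ∧ s.discard B k = k s' := by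
  refine ⟨⟨s.free ^^^ (s.free &&& mask B), _, _⟩,
    F.filter fun y ↦ ¬(mask B).testBit (code y), ⟨h.chosen_subset,
    fun y hy ↦ ?_, ?_, h.chosen_eq, h.exists_of_testBit_sums⟩, force_eq _ _⟩
  · rw [Finset.mem_filter, testBit_mask_code]
    exact ⟨h.sdiff_subset hy, Finset.disjoint_right.1 hB (Finset.sdiff_subset hy)⟩
  · rw [h.free_eq, mask_xor_and]

end IsStage

end SearchState

open SearchState

/-- The masks of the caps of size `k` that extend the points chosen in the state `s` by some of the
given blocks of points. -/
def search (k : ℕ) : List (List Point) → SearchState → List ℕ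
  | [], s => bif s.chosen % 127 == k then [s.chosen] else []
  | B :: Bs, s =>
    bif Nat.ble k (s.free % 127 + s.chosen % 127) then
      bif Nat.beq (s.free &&& mask B.toFinset) 0 then search k Bs s
      else B.foldr choose (search k Bs) s ++ s.discard B.toFinset (search k Bs)
    else []

variable {T D F : Finset Point} {s : SearchState} {k : ℕ} {Bs : List (List Point)}

theorem mask_mem_search (hT : IsCap T) (hk : T.card = k)
    (hBs : ∀ B ∈ Bs, (∀ x ∈ B, x ∈ T) ∨ ∀ x ∈ B, x ∉ T) (hcover : ∀ x ∈ T \ D, ∃ B ∈ Bs, x ∈ B)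
    (h : s.IsStage T D F) : mask T ∈ search k Bs s := by
  induction Bs generalizing s D F with
  | nil =>
    obtain rfl : D = T := h.chosen_subset.antisymm fun x hx ↦ by
      by_contra hxD
      simpa using hcover x (Finset.mem_sdiff.2 ⟨hx, hxD⟩)
    simp [search, h.chosen_eq, mask_mod_eq_card, hk]
  | cons B Bs ih =>
    obtain ⟨hB, hBs⟩ := List.forall_mem_cons.1 hBs
    have hcover' : ∀ E, D ⊆ E → Disjoint B.toFinset (T \ E) → ∀ x ∈ T \ E, ∃ B ∈ Bs, x ∈ B := by
      intro E hDE hBE x hx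
      obtain ⟨B', hB', hxB'⟩ := hcover x (Finset.sdiff_subset_sdiff subset_rfl hDE hx)
      obtain rfl | hB' := List.mem_cons.1 hB'
      · exact absurd hx (Finset.disjoint_left.1 hBE (List.mem_toFinset.2 hxB'))
      · exact ⟨B', hB', hxB'⟩
    have hle : Nat.ble k (s.free % 127 + s.chosen % 127) = true := Nat.ble_eq.symm ▸ hk ▸ h.card_le
    rw [search, hle, cond_true]
    cases hfree : Nat.beq (s.free &&& mask B.toFinset) 0
    · refine List.mem_append.2 (hB.imp (fun hB ↦ ?_) fun hB ↦ ?_)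
      · obtain ⟨s', F', h', e⟩ := h.exists_foldr_choose_eq hT hB (search k Bs)
        refine e ▸ ih hBs (hcover' _ Finset.subset_union_left ?_) h'
        exact disjoint_sdiff_self_right.mono_left Finset.subset_union_right
      · have hBT : Disjoint B.toFinset T := by simpa [Finset.disjoint_left] using hB
        obtain ⟨s', F', h', e⟩ := h.exists_discard_eq hBT (search k Bs)
        exact e ▸ ih hBs (hcover' D subset_rfl (hBT.mono_right Finset.sdiff_subset)) h'
    · rw [h.free_eq, Nat.beq_eq, mask_and_eq_zero_iff] at hfree
      exact ih hBs (hcover' D subset_rfl (hfree.symm.mono_right h.sdiff_subset)) h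

/-- The masks of the caps of size `k` that contain the points of `l` and otherwise consist of blocks
in `Bs` contained in `F`. -/
def capSearch (k : ℕ) (Bs : List (List Point)) (F : Finset Point) (l : List Point) : List ℕ :=
  force (mask F) fun free ↦ l.foldr choose (search k Bs) ⟨free, 0, 0⟩

theorem mask_mem_capSearch (hT : IsCap T) (hk : T.card = k)
    (hBs : ∀ B ∈ Bs, (∀ x ∈ B, x ∈ T) ∨ ∀ x ∈ B, x ∉ T) (hcover : ∀ x ∈ T, ∃ B ∈ Bs, x ∈ B)
    (hTF : T ⊆ F) {l : List Point} (hl : ∀ x ∈ l, x ∈ T) : mask T ∈ capSearch k Bs F l := by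
  have h₀ : IsStage T ∅ F ⟨mask F, 0, 0⟩ :=
    ⟨T.empty_subset, Finset.sdiff_subset.trans hTF, rfl, by simp [mask], by simp⟩
  obtain ⟨s, F', h, e⟩ := h₀.exists_foldr_choose_eq hT hl (search k Bs)
  rw [capSearch, force_eq, e]
  exact mask_mem_search hT hk hBs (fun x hx ↦ hcover x (Finset.sdiff_subset hx)) h

/-- All points of the space. -/
def points : List Point := (List.range 81).map fun i k ↦ ((i / 3 ^ (k : ℕ) : ℕ) : ZMod 3)

theorem mem_points : ∀ x : Point, x ∈ points := by
  decide +kernel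

end Search

section Antipodal

/-- A family of points of `C`, pairwise distinct even up to sign, whose negatives also lie in
`C`. -/
structure AntipodalFamily {n : ℕ} {ι : Type*} (C : Finset (Fin n → ZMod 3))
    (u : ι → Fin n → ZMod 3) : Prop where
  mem : ∀ i, u i ∈ C
  neg_mem : ∀ i, -u i ∈ C
  injective : Function.Injective u
  ne_neg : ∀ i j, u i ≠ -u j

theorem eq_one_or_eq_neg_one {a : ZMod 3} (ha : a ≠ 0) : a = 1 ∨ a = -1 := by
  decide +revert

namespace AntipodalFamily

variable {n : ℕ} {ι : Type*} {C : Finset (Fin n → ZMod 3)} {u : ι → Fin n → ZMod 3} {a b : ZMod 3}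
  {i j : ι}

theorem comp (hu : AntipodalFamily C u) {κ : Type*} {f : κ → ι} (hf : Function.Injective f) :
    AntipodalFamily C (u ∘ f) :=
  ⟨fun _ ↦ hu.mem _, fun _ ↦ hu.neg_mem _, hu.injective.comp hf, fun _ _ ↦ hu.ne_neg _ _⟩

theorem smul_mem (hu : AntipodalFamily C u) (i : ι) (ha : a ≠ 0) : a • u i ∈ C := by
  rcases eq_one_or_eq_neg_one ha with rfl | rfl
  · simpa using hu.mem i
  · simpa using hu.neg_mem i

theorem smul_ne_smul (hu : AntipodalFamily C u) (hij : i ≠ j) (ha : a ≠ 0) (hb : b ≠ 0) :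
    a • u i ≠ b • u j := by
  have h₁ := hu.injective.ne hij
  have h₂ := hu.ne_neg i j
  have h₃ := (hu.ne_neg j i).symm
  rcases eq_one_or_eq_neg_one ha with rfl | rfl <;>
    rcases eq_one_or_eq_neg_one hb with rfl | rfl <;> simpa

theorem smul (hu : AntipodalFamily C u) {a : ι → ZMod 3} (ha : ∀ i, a i ≠ 0) :
    AntipodalFamily C (fun i ↦ a i • u i) where
  mem i := hu.smul_mem i (ha i)
  neg_mem i := by simpa using hu.smul_mem i (neg_ne_zero.2 (ha i))
  injective i j h := by
    by_contra hij
    exact hu.smul_ne_smul hij (ha i) (ha j) h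
  ne_neg i j h := by
    rw [← neg_smul] at h
    by_cases hij : i = j
    · subst hij
      rcases eq_one_or_eq_neg_one (ha i) with hi | hi <;>
        exact hu.ne_neg i i (by simpa [hi, eq_comm] using h)
    · exact hu.smul_ne_smul hij (ha i) (neg_ne_zero.2 (ha j)) h

theorem zero_notMem (hu : AntipodalFamily C u) (hC : IsCap C) (i : ι) : 0 ∉ C := by
  simpa using hC.neg_add_notMem (hu.mem i) (hu.neg_mem i) (hu.ne_neg i i)

theorem smul_add_smul_notMem (hu : AntipodalFamily C u) (hC : IsCap C) (hij : i ≠ j) (ha : a ≠ 0)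
    (hb : b ≠ 0) : a • u i + b • u j ∉ C := by
  have ha := neg_ne_zero.2 ha
  have hb := neg_ne_zero.2 hb
  simpa [add_comm] using
    hC.neg_add_notMem (hu.smul_mem i ha) (hu.smul_mem j hb) (hu.smul_ne_smul hij ha hb)

theorem eq_zero_of_smul_add_smul_add_smul_eq_zero (hu : AntipodalFamily C u) (hC : IsCap C)
    (i j k : ι) (hij : i ≠ j) (hik : i ≠ k) (hjk : j ≠ k) {a b c : ZMod 3}
    (h : a • u i + b • u j + c • u k = 0) : a = 0 := by
  by_contra ha
  have ha' := hu.smul_mem i ha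
  rw [add_assoc, add_eq_zero_iff_eq_neg] at h
  rcases eq_or_ne b 0 with rfl | hb <;> rcases eq_or_ne c 0 with rfl | hc
  · exact hu.zero_notMem hC i (by simpa [h] using ha')
  · exact hu.smul_ne_smul hik ha (neg_ne_zero.2 hc) (by simpa using h)
  · exact hu.smul_ne_smul hij ha (neg_ne_zero.2 hb) (by simpa using h)
  · rw [h, neg_add, ← neg_smul, ← neg_smul] at ha'
    exact hu.smul_add_smul_notMem hC hjk (neg_ne_zero.2 hb) (neg_ne_zero.2 hc) ha'

theorem linearIndependent {u : Fin 3 → Fin n → ZMod 3} (hu : AntipodalFamily C u) (hC : IsCap C) :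
    LinearIndependent (ZMod 3) u := by
  have key := hu.eq_zero_of_smul_add_smul_add_smul_eq_zero hC
  refine Fintype.linearIndependent_iff.2 fun c hc ↦ ?_
  rw [Fin.sum_univ_three] at hc
  refine Fin.forall_fin_succ.2 ⟨?_, Fin.forall_fin_two.2 ⟨?_, ?_⟩⟩
  · exact key 0 1 2 (by decide) (by decide) (by decide) hc
  · exact key 1 2 0 (by decide) (by decide) (by decide) ((add_rotate ..).symm.trans hc)
  · exact key 2 0 1 (by decide) (by decide) (by decide) ((add_rotate ..).trans hc)

variable [Fintype ι] {c : ι → ZMod 3}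

theorem sum_smul_notMem (hu : AntipodalFamily C u) (hC : IsCap C) (hc : hammingNorm c = 2) :
    ∑ i, c i • u i ∉ C := by
  classical
  obtain ⟨i, j, hij, hc⟩ := Finset.card_eq_two.1 hc
  have hsupp (k : ι) : c k ≠ 0 ↔ k = i ∨ k = j := by
    simpa using Finset.ext_iff.1 hc k
  rw [← Finset.sum_subset (Finset.subset_univ {i, j}) fun k _ hk ↦ ?_, Finset.sum_pair hij]
  · exact hu.smul_add_smul_notMem hC hij ((hsupp i).2 (.inl rfl)) ((hsupp j).2 (.inr rfl))
  · rw [not_not.1 (mt (hsupp k).1 (by simpa using hk)), zero_smul]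

theorem exists_mem_notMem_span {u : Fin 3 → Fin n → ZMod 3} (hu : AntipodalFamily C u)
    (hC : IsCap C) (hcard : 14 < C.card) : ∃ p ∈ C, p ∉ Submodule.span (ZMod 3) (Set.range u) := by
  by_contra! hspan
  have hsub : C ⊆ ({c | hammingNorm c ≠ 0 ∧ hammingNorm c ≠ 2} : Finset (Fin 3 → ZMod 3)).image
      fun c ↦ ∑ i, c i • u i := by
    intro p hp
    obtain ⟨c, rfl⟩ := (Submodule.mem_span_range_iff_exists_fun _).1 (hspan p hp)
    refine Finset.mem_image_of_mem _ <|
      Finset.mem_filter.2 ⟨Finset.mem_univ c, fun h ↦ ?_, fun h ↦ ?_⟩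
    · rw [hammingNorm_eq_zero.1 h] at hp
      exact hu.zero_notMem hC 0 (by simpa using hp)
    · exact hu.sum_smul_notMem hC h hp
  exact hcard.not_ge ((Finset.card_le_card hsub).trans (Finset.card_image_le.trans (by decide)))

protected theorem cons {k : ℕ} {u : Fin k → Fin n → ZMod 3} (hu : AntipodalFamily C u)
    {p : Fin n → ZMod 3} (hp : p ∈ C) (hp' : -p ∈ C) (hp₀ : p ≠ 0) (hpu : ∀ i, p ≠ u i)
    (hpu' : ∀ i, p ≠ -u i) : AntipodalFamily C (Fin.cons p u : Fin (k + 1) → Fin n → ZMod 3) where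
  mem := Fin.forall_fin_succ.2 ⟨hp, hu.mem⟩
  neg_mem := Fin.forall_fin_succ.2 ⟨hp', hu.neg_mem⟩
  injective := Fin.cons_injective_iff.2 ⟨fun ⟨i, hi⟩ ↦ hpu i hi.symm, hu.injective⟩
  ne_neg := by
    have hpp : p ≠ -p := fun h ↦ hp₀ <| funext fun i ↦
      (by decide : ∀ a : ZMod 3, a = -a → a = 0) _ (congrFun h i)
    simp only [Fin.forall_fin_succ (n := k), Fin.cons_zero, Fin.cons_succ]
    exact ⟨⟨hpp, hpu'⟩, fun i ↦ ⟨fun h ↦ hpu' i (neg_eq_iff_eq_neg.1 h.symm), hu.ne_neg i⟩⟩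

theorem exists_of_le_card (h₀ : 0 ∉ C) :
    ∀ k : ℕ, 2 * k ≤ (C.filter (-· ∈ C)).card + 1 →
      ∃ u : Fin k → Fin n → ZMod 3, AntipodalFamily C u
  | 0, _ => ⟨Fin.elim0, fun i ↦ i.elim0, fun i ↦ i.elim0, fun i ↦ i.elim0, fun i ↦ i.elim0⟩
  | k + 1, h => by
    obtain ⟨u, hu⟩ := exists_of_le_card h₀ k (by omega)
    have hlt : (Finset.univ.image u ∪ Finset.univ.image (-u)).card < (C.filter (-· ∈ C)).card :=
      calc (Finset.univ.image u ∪ Finset.univ.image (-u)).card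
          ≤ (Finset.univ.image u).card + (Finset.univ.image (-u)).card := Finset.card_union_le ..
        _ ≤ k + k := add_le_add (Finset.card_image_le.trans_eq (Finset.card_fin k))
          (Finset.card_image_le.trans_eq (Finset.card_fin k))
        _ < (C.filter (-· ∈ C)).card := by omega
    obtain ⟨p, hp, hpu⟩ := Finset.exists_mem_notMem_of_card_lt_card hlt
    obtain ⟨hpC, hpC'⟩ := Finset.mem_filter.1 hp
    simp only [Finset.mem_union, Finset.mem_image, Finset.mem_univ, true_and, Pi.neg_apply, not_or,
      not_exists] at hpu
    exact ⟨_, hu.cons hpC hpC' (ne_of_mem_of_not_mem hpC h₀) (fun i ↦ Ne.symm (hpu.1 i))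
      fun i ↦ Ne.symm (hpu.2 i)⟩

end AntipodalFamily

end Antipodal

section Quadric

/-- The cone `x₀² + x₁² + x₂ x₃ = 0` over an elliptic quadric of `PG(3,3)`, without its vertex
`0`. -/
def quadricCap : Finset Point := {x | x ≠ 0 ∧ x 0 ^ 2 + x 1 ^ 2 + x 2 * x 3 = 0}

/-- The caps affinely equivalent to `quadricCap`. -/
def IsQuadricCap (C : Finset Point) : Prop :=
  ∃ f : Point ≃ᵃ[ZMod 3] Point, f.toEquiv.finsetCongr quadricCap = C

variable {C : Finset Point}

theorem card_quadricCap : quadricCap.card = 20 := by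
  decide +kernel

theorem isCap_quadricCap : IsCap quadricCap := by
  rw [isCap_iff_neg_add_notMem]
  decide +kernel

theorem exists_neg_add_mem_quadricCap :
    ∀ x ∉ quadricCap, ∃ y ∈ quadricCap, -(x + y) ∈ quadricCap := by
  decide +kernel

theorem isQuadricCap_of_finsetCongr (f : Point ≃ᵃ[ZMod 3] Point)
    (h : IsQuadricCap (f.toEquiv.finsetCongr C)) : IsQuadricCap C := by
  obtain ⟨g, hg⟩ := h
  refine ⟨g.trans f.symm, f.toEquiv.finsetCongr.injective ?_⟩
  rw [← hg]
  ext x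
  simp only [Equiv.finsetCongr_apply, Finset.mem_map_equiv]
  exact iff_of_eq (congrArg (· ∈ quadricCap) (congrArg g.symm (f.apply_symm_apply x)))

theorem isQuadricCap_image_mulVec {M : Matrix (Fin 4) (Fin 4) (ZMod 3)} (hM : M.det ≠ 0) :
    IsQuadricCap (quadricCap.image M.mulVec) := by
  refine ⟨(M.toLinearEquiv' (M.invertibleOfIsUnitDet hM.isUnit)).toAffineEquiv, ?_⟩
  rw [Equiv.finsetCongr_apply, Finset.map_eq_image]
  rfl

/-- The points `±e₀, ±e₁, ±e₂, e₃, e₀ + e₁ + e₂`. -/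
def frame : List Point :=
  [Pi.single 0 1, -Pi.single 0 1, Pi.single 1 1, -Pi.single 1 1, Pi.single 2 1, -Pi.single 2 1,
    Pi.single 3 1, ∑ i : Fin 3, Pi.single i.castSucc 1]

/-- Matrices carrying `quadricCap` to the six caps of size 20 that contain `frame` and one of the
points `-e₃`, `-(e₀ + e₁ + e₂)`. -/
def frameMatrices : List (Matrix (Fin 4) (Fin 4) (ZMod 3)) :=
  [!![1, 0, 0, 0; 0, 1, 0, 0; 1, 1, 0, 2; 1, 1, 1, 0],
    !![1, 0, 0, 0; 1, 1, 0, 0; 0, 1, 0, 1; 1, 2, 1, 0],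
    !![1, 1, 0, 0; 1, 0, 0, 1; 0, 1, 0, 1; 0, 0, 1, 2],
    !![1, 1, 0, 0; 1, 0, 0, 0; 0, 1, 0, 1; 1, 2, 1, 0],
    !![1, 0, 0, 1; 1, 1, 0, 0; 0, 1, 0, 1; 0, 0, 1, 2],
    !![1, 0, 0, 0; 0, 1, 0, 0; 1, 1, 0, 1; 2, 2, 1, 0]]

theorem det_ne_zero_of_mem_frameMatrices : ∀ M ∈ frameMatrices, M.det ≠ 0 := by
  rw [← List.forall_iff_forall_mem]
  decide +kernel

set_option maxRecDepth 100000 in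
theorem capSearch_neg_single_last_cons_frame :
    capSearch 20 (points.map fun x ↦ [x]) Finset.univ (-Pi.single 3 1 :: frame) ⊆
      frameMatrices.map fun M ↦ mask (quadricCap.image M.mulVec) := by
  decide +kernel

set_option maxRecDepth 100000 in
theorem capSearch_neg_sum_single_cons_frame :
    capSearch 20 (points.map fun x ↦ [x]) Finset.univ
      ((-∑ i : Fin 3, Pi.single i.castSucc 1) :: frame) ⊆
      frameMatrices.map fun M ↦ mask (quadricCap.image M.mulVec) := by
  decide +kernel

theorem mask_mem_capSearch_cons_frame (hC : IsCap C) (hcard : C.card = 20)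
    (hframe : ∀ x ∈ frame, x ∈ C) {p : Point} (hp : p ∈ C) :
    mask C ∈ capSearch 20 (points.map fun x ↦ [x]) Finset.univ (p :: frame) := by
  refine mask_mem_capSearch hC hcard ?_ ?_ C.subset_univ (List.forall_mem_cons.2 ⟨hp, hframe⟩)
  · simpa using fun x _ ↦ em (x ∈ C)
  · exact fun x _ ↦ ⟨[x], List.mem_map_of_mem (mem_points x), List.mem_singleton_self x⟩

theorem isQuadricCap_of_frame_subset (hC : IsCap C) (hcard : C.card = 20)
    (hframe : ∀ x ∈ frame, x ∈ C)
    (hneg : -Pi.single 3 1 ∈ C ∨ -∑ i : Fin 3, Pi.single i.castSucc 1 ∈ C) : IsQuadricCap C := by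
  have hmem : mask C ∈ frameMatrices.map fun M ↦ mask (quadricCap.image M.mulVec) := by
    rcases hneg with h | h <;> have h := mask_mem_capSearch_cons_frame hC hcard hframe h
    · exact capSearch_neg_single_last_cons_frame h
    · exact capSearch_neg_sum_single_cons_frame h
  obtain ⟨M, hM, h⟩ := List.mem_map.1 hmem
  exact mask_injective h ▸ isQuadricCap_image_mulVec (det_ne_zero_of_mem_frameMatrices M hM)

theorem isQuadricCap_of_linearIndependent (hC : IsCap C) (hcard : C.card = 20)
    {u : Fin 3 → Point} (hu : LinearIndependent (ZMod 3) u) (hmem : ∀ i, u i ∈ C)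
    (hneg : ∀ i, -u i ∈ C) (hsum : ∑ i, u i ∈ C) {p : Point}
    (hp : p ∉ Submodule.span (ZMod 3) (Set.range u)) (hpC : p ∈ C)
    (h : -p ∈ C ∨ -∑ i, u i ∈ C) : IsQuadricCap C := by
  let b := basisOfLinearIndependentOfCardEqFinrank (linearIndependent_finSnoc.2 ⟨hu, hp⟩) (by simp)
  have hb : ⇑b = Fin.snoc u p := coe_basisOfLinearIndependentOfCardEqFinrank ..
  have hbu (i : Fin 3) : Pi.single i.castSucc 1 = b.equivFun (u i) := by
    rw [← Fin.snoc_castSucc (α := fun _ ↦ Point) p u i, ← hb, ← LinearEquiv.symm_apply_eq]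
    simp
  have hbp : Pi.single 3 1 = b.equivFun p := by
    rw [← Fin.snoc_last (α := fun _ ↦ Point) p u, ← hb, ← LinearEquiv.symm_apply_eq]
    simp
  let f := b.equivFun.toAffineEquiv
  have hf (x : Point) : b.equivFun x ∈ f.toEquiv.finsetCongr C ↔ x ∈ C :=
    Finset.mem_map' f.toEquiv.toEmbedding
  have hframe : frame = [u 0, -u 0, u 1, -u 1, u 2, -u 2, p, ∑ i, u i].map b.equivFun := by
    simp only [List.map_cons, List.map_nil, map_neg, map_sum, ← hbu, ← hbp]
    rfl
  refine isQuadricCap_of_finsetCongr f <| isQuadricCap_of_frame_subset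
    ((isCap_finsetCongr_iff f).2 hC) (by simpa using hcard) ?_ ?_
  · simp only [hframe, List.forall_mem_map, hf]
    simp [hmem, hneg, hsum, hpC]
  · simpa only [hbu, hbp, ← map_sum, ← map_neg, hf] using h

theorem isQuadricCap_of_neg_sum_mem (hC : IsCap C) (hcard : C.card = 20) {u : Fin 3 → Point}
    (hu : AntipodalFamily C u) (hsum : ∑ i, u i ∈ C) (hneg : -∑ i, u i ∈ C) : IsQuadricCap C := by
  obtain ⟨p, hpC, hp⟩ := hu.exists_mem_notMem_span hC (by omega)
  exact isQuadricCap_of_linearIndependent hC hcard (hu.linearIndependent hC) hu.mem hu.neg_mem hsum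
    hp hpC (.inr hneg)

theorem isQuadricCap_of_mem_span (hC : IsCap C) (hcard : C.card = 20) {v : Fin 4 → Point}
    (hv : AntipodalFamily C v)
    (hspan : v 3 ∈ Submodule.span (ZMod 3) (Set.range (v ∘ Fin.castSucc))) : IsQuadricCap C := by
  obtain ⟨c, hc⟩ := (Submodule.mem_span_range_iff_exists_fun _).1 hspan
  have hc_ne (i : Fin 3) : c i ≠ 0 := by
    intro hi
    rw [Fin.sum_univ_succAbove _ i, Fin.sum_univ_two, hi, zero_smul, zero_add] at hc
    refine neg_ne_zero.2 one_ne_zero <| hv.eq_zero_of_smul_add_smul_add_smul_eq_zero hC 3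
      (i.succAbove 0).castSucc (i.succAbove 1).castSucc ?_ ?_ ?_
      (a := -1) (b := c (i.succAbove 0)) (c := c (i.succAbove 1)) ?_
    · exact (Fin.castSucc_lt_last _).ne'
    · exact (Fin.castSucc_lt_last _).ne'
    · exact fun h ↦ absurd (Fin.succAbove_right_injective (Fin.castSucc_injective _ h)) (by decide)
    · rw [← hc, neg_one_smul, add_assoc]
      exact neg_add_cancel _
  have hu := (hv.comp (Fin.castSucc_injective 3)).smul hc_ne
  refine isQuadricCap_of_neg_sum_mem hC hcard hu ?_ ?_
  · exact hc ▸ hv.mem 3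
  · exact hc ▸ hv.neg_mem 3

theorem card_filter_hammingNorm_eq_four_le (hC : IsCap C)
    (hs : AntipodalFamily C fun i ↦ Pi.single i 1) : (C.filter (hammingNorm · = 4)).card ≤ 8 := by
  let φ (c : Point) : Point := 2 • Pi.single 0 (c 0) - c
  have hφ : ∀ c : Point, φ (φ c) = c := by
    decide +kernel
  have hφ₄ : ∀ c : Point, hammingNorm c = 4 → hammingNorm (φ c) = 4 ∧ c ≠ φ c ∧ c 0 ≠ 0 ∧
      -(c + φ c) = c 0 • Pi.single 0 1 := by
    decide +kernel
  set E := C.filter (hammingNorm · = 4)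
  have hdisj : Disjoint E (E.image φ) := by
    refine Finset.disjoint_right.2 fun d hd hdE ↦ ?_
    obtain ⟨c, hc, rfl⟩ := Finset.mem_image.1 hd
    obtain ⟨hcC, hc4⟩ := Finset.mem_filter.1 hc
    obtain ⟨-, hne, hc0, hsum⟩ := hφ₄ c hc4
    exact hC.neg_add_notMem hcC (Finset.mem_filter.1 hdE).1 hne (hsum ▸ hs.smul_mem 0 hc0)
  have hsub : E ∪ E.image φ ⊆ ({c | hammingNorm c = 4} : Finset Point) := by
    refine Finset.union_subset (Finset.filter_subset_filter _ C.subset_univ) ?_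
    refine Finset.image_subset_iff.2 fun c hc ↦ Finset.mem_filter.2 ⟨Finset.mem_univ _, ?_⟩
    exact (hφ₄ c (Finset.mem_filter.1 hc).2).1
  have hcard := (Finset.card_union_of_disjoint hdisj).symm.trans_le (Finset.card_le_card hsub)
  have h16 : ({c | hammingNorm c = 4} : Finset Point).card = 16 := by
    decide +kernel
  rw [Finset.card_image_of_injective E (Function.LeftInverse.injective hφ), h16] at hcard
  omega

theorem exists_mem_hammingNorm_eq_three (hC : IsCap C)
    (hs : AntipodalFamily C fun i ↦ Pi.single i 1) (hcard : 16 < C.card) :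
    ∃ c ∈ C, hammingNorm c = 3 := by
  by_contra! h3
  have hnorm (c : Point) (hc : c ∈ C) (hc4 : hammingNorm c ≠ 4) : hammingNorm c = 1 := by
    have h0 : hammingNorm c ≠ 0 := fun h ↦ hs.zero_notMem hC 0 (hammingNorm_eq_zero.1 h ▸ hc)
    have h2 : hammingNorm c ≠ 2 := fun h ↦
      hs.sum_smul_notMem hC h (by rwa [← pi_eq_sum_univ'])
    have h4 : hammingNorm c ≤ 4 := hammingNorm_le_card_fintype
    have := h3 c hc
    omega
  have h₁ : (C.filter (¬hammingNorm · = 4)).card ≤ 8 :=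
    calc (C.filter (¬hammingNorm · = 4)).card
        ≤ ({c | hammingNorm c = 1} : Finset Point).card := Finset.card_le_card fun c hc ↦
          Finset.mem_filter.2 ⟨Finset.mem_univ c, by grind⟩
      _ = 8 := by decide +kernel
  have h₄ := card_filter_hammingNorm_eq_four_le hC hs
  exact hcard.not_ge <| (C.card_filter_add_card_filter_not _).symm.trans_le (add_le_add h₄ h₁)

theorem isQuadricCap_of_single_mem (hC : IsCap C) (hcard : C.card = 20)
    (hs : AntipodalFamily C fun i ↦ Pi.single i 1) : IsQuadricCap C := by
  obtain ⟨c, hcC, hc⟩ := exists_mem_hammingNorm_eq_three hC hs (by omega)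
  obtain ⟨k, hck, hcne⟩ : ∃ k, c k = 0 ∧ ∀ i, c (k.succAbove i) ≠ 0 := by
    clear hcC
    decide +revert +kernel
  have hu := (hs.comp k.succAbove_right_injective).smul hcne
  have hsum : ∑ i, c (k.succAbove i) • Pi.single (k.succAbove i) 1 = c := by
    conv_rhs => rw [pi_eq_sum_univ' c, Fin.sum_univ_succAbove _ k, hck, zero_smul, zero_add]
  refine isQuadricCap_of_linearIndependent hC hcard (hu.linearIndependent hC) hu.mem hu.neg_mem
    (hsum.symm ▸ hcC) (fun hspan ↦ ?_) (hs.mem k) (.inl (hs.neg_mem k))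
  have hker : Submodule.span (ZMod 3) (Set.range fun i ↦
      c (k.succAbove i) • ((fun i : Fin 4 ↦ Pi.single i 1) ∘ k.succAbove) i) ≤
        LinearMap.ker (LinearMap.proj k : Point →ₗ[ZMod 3] ZMod 3) := by
    rw [Submodule.span_le]
    rintro _ ⟨i, rfl⟩
    simp
  simpa using hker hspan

theorem isQuadricCap_of_antipodalFamily (hC : IsCap C) (hcard : C.card = 20) {v : Fin 4 → Point}
    (hv : AntipodalFamily C v) : IsQuadricCap C := by
  by_cases hspan : v 3 ∈ Submodule.span (ZMod 3) (Set.range (v ∘ Fin.castSucc))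
  · exact isQuadricCap_of_mem_span hC hcard hv hspan
  have hli : LinearIndependent (ZMod 3) v := linearIndependent_finSucc'.2
    ⟨(hv.comp (Fin.castSucc_injective 3)).linearIndependent hC, hspan⟩
  let b := basisOfLinearIndependentOfCardEqFinrank hli (by simp)
  let f := b.equivFun.toAffineEquiv
  have hbv : ⇑b = v := coe_basisOfLinearIndependentOfCardEqFinrank ..
  have hb (i : Fin 4) : Pi.single i 1 = b.equivFun (v i) := by
    rw [← LinearEquiv.symm_apply_eq, ← hbv]
    simp
  have hf (x : Point) : b.equivFun x ∈ f.toEquiv.finsetCongr C ↔ x ∈ C :=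
    Finset.mem_map' f.toEquiv.toEmbedding
  refine isQuadricCap_of_finsetCongr f <| isQuadricCap_of_single_mem
    ((isCap_finsetCongr_iff f).2 hC) (by simpa using hcard) ⟨?_, ?_, ?_, ?_⟩ <;> simp only [hb]
  · exact fun i ↦ (hf _).2 (hv.mem i)
  · exact fun i ↦ map_neg b.equivFun (v i) ▸ (hf _).2 (hv.neg_mem i)
  · exact b.equivFun.injective.comp hv.injective
  · exact fun i j h ↦ hv.ne_neg i j (b.equivFun.injective (by rw [h, map_neg]))

theorem exists_lt_card_filter_neg_add_mem {n k : ℕ} {C : Finset (Fin n → ZMod 3)} (hC : IsCap C)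
    (hk : Cᶜ.card * k < C.offDiag.card) : ∃ q ∉ C, k < (C.filter fun x ↦ -(q + x) ∈ C).card := by
  have hmaps : ∀ p ∈ C.offDiag, -(p.1 + p.2) ∈ Cᶜ := fun p hp ↦ by
    obtain ⟨h₁, h₂, hne⟩ := Finset.mem_offDiag.1 hp
    exact Finset.mem_compl.2 (hC.neg_add_notMem h₁ h₂ hne)
  obtain ⟨q, hq, hlt⟩ := Finset.exists_lt_card_fiber_of_mul_lt_card_of_maps_to hmaps hk
  refine ⟨q, Finset.mem_compl.1 hq, hlt.trans_le <|
    Finset.card_le_card_of_injOn Prod.fst (fun p hp ↦ ?_) fun p hp r hr hpr ↦ ?_⟩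
  · obtain ⟨hp', rfl⟩ := Finset.mem_filter.1 hp
    obtain ⟨h₁, h₂, -⟩ := Finset.mem_offDiag.1 hp'
    exact Finset.mem_filter.2 ⟨h₁, by simpa using h₂⟩
  · have h := (Finset.mem_filter.1 hp).2.trans (Finset.mem_filter.1 hr).2.symm
    rw [hpr] at h
    exact Prod.ext hpr (add_left_cancel (neg_injective h))

theorem isQuadricCap_of_card_eq (hC : IsCap C) (hcard : C.card = 20) : IsQuadricCap C := by
  obtain ⟨q, hq, hlt⟩ := exists_lt_card_filter_neg_add_mem hC (k := 6)
    (by rw [Finset.offDiag_card, Finset.card_compl, hcard]; simp)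
  let f := AffineEquiv.constVAdd (ZMod 3) Point (-q)
  have hf (x : Point) : x ∈ f.toEquiv.finsetCongr C ↔ q + x ∈ C := by
    simp [f, Equiv.finsetCongr_apply, Finset.mem_map_equiv]
  have hle : (C.filter fun x ↦ -(q + x) ∈ C).card ≤
      ((f.toEquiv.finsetCongr C).filter (-· ∈ f.toEquiv.finsetCongr C)).card := by
    refine Finset.card_le_card_of_injOn f (fun x hx ↦ ?_) f.injective.injOn
    obtain ⟨hx, hx'⟩ := Finset.mem_filter.1 hx
    refine Finset.mem_filter.2 ⟨Finset.mem_map_of_mem _ hx, (hf _).2 ?_⟩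
    have h3 : ∀ a b : ZMod 3, -(a + b) = a + -(-a + b) := by decide
    exact (funext fun i ↦ h3 (q i) (x i) : -(q + x) = q + -f x) ▸ hx'
  obtain ⟨v, hv⟩ := AntipodalFamily.exists_of_le_card (mt (hf 0).1 (by simpa using hq)) 4
    (Nat.succ_le_succ (hlt.trans_le hle))
  exact isQuadricCap_of_finsetCongr f <|
    isQuadricCap_of_antipodalFamily ((isCap_finsetCongr_iff f).2 hC) (by simpa using hcard) hv

theorem card_le_of_isCap (hC : IsCap C) : C.card ≤ 20 := by
  by_contra! hlt
  obtain ⟨D, hDC, hD⟩ := Finset.exists_subset_card_eq hlt.le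
  obtain ⟨x, hxC, hxD⟩ := Finset.exists_mem_notMem_of_card_lt_card (hD.trans_lt hlt)
  obtain ⟨f, hf⟩ := isQuadricCap_of_card_eq (hC.subset hDC) hD
  have hmem (y : Point) : f y ∈ D ↔ y ∈ quadricCap :=
    hf ▸ Finset.mem_map' f.toEquiv.toEmbedding
  obtain ⟨y, hy, hz⟩ := exists_neg_add_mem_quadricCap (f.symm x)
    fun h ↦ hxD (by simpa using (hmem _).2 h)
  have hsum := (add_add_map_eq_zero_iff f (f.symm x) y _).2 (add_neg_cancel _)
  rw [f.apply_symm_apply] at hsum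
  have hyD := (hmem y).2 hy
  refine hC.neg_add_notMem hxC (hDC hyD) (ne_of_mem_of_not_mem hyD hxD).symm ?_
  exact eq_neg_of_add_eq_zero_right hsum ▸ hDC ((hmem _).2 hz)

theorem maximalCap_iff : MaximalCap C ↔ IsCap C ∧ C.card = 20 :=
  maximalCap_iff_of_card_le isCap_quadricCap card_quadricCap fun _ ↦ card_le_of_isCap

theorem MaximalCap.isQuadricCap (hC : MaximalCap C) : IsQuadricCap C :=
  isQuadricCap_of_card_eq (maximalCap_iff.1 hC).1 (maximalCap_iff.1 hC).2

end Quadric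

section Partition

variable {P Q : Finset (Finset Point)} {C : Finset Point} {a c : Point}

/-- `c` is the vertex of the cone `C ∪ {c}`, where `C` is a quadric cap. -/
def IsVertex (c : Point) (C : Finset Point) : Prop :=
  ∃ f : Point ≃ᵃ[ZMod 3] Point, f.toEquiv.finsetCongr quadricCap = C ∧ f 0 = c

theorem neg_mem_quadricCap : ∀ x ∈ quadricCap, -x ∈ quadricCap := by
  decide +kernel

theorem eq_zero_of_forall_neg_add_mem_quadricCap :
    ∀ c : Point, (∀ x ∈ quadricCap, -(c + x) ∈ quadricCap) → c = 0 := by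
  decide +kernel

-- A plane of `PG(3,3)` meets the quadric in 1 or 4 points, so the hyperplanes parallel to a linear
-- one meet `quadricCap` in 2, 9, 9 or 8, 6, 6 points.
theorem card_filter_dotProduct_quadricCap_modEq : ∀ (v : Point) (s t : ZMod 3),
    (quadricCap.filter (v ⬝ᵥ · = s)).card + 2 * (if t = 0 then 1 else 0) ≡
      (quadricCap.filter (v ⬝ᵥ · = t)).card + 2 * (if s = 0 then 1 else 0) [MOD 9] := by
  decide +kernel

namespace IsVertex

theorem neg_add_mem (h : IsVertex c C) {x : Point} (hx : x ∈ C) : -(c + x) ∈ C := by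
  obtain ⟨f, rfl, rfl⟩ := h
  obtain ⟨y, hy, rfl⟩ := Finset.mem_map.1 hx
  have hsum := (add_add_map_eq_zero_iff f 0 y (-y)).2 (by simp)
  exact eq_neg_of_add_eq_zero_right hsum ▸ Finset.mem_map_of_mem _ (neg_mem_quadricCap y hy)

theorem eq_zero (h : IsVertex c quadricCap) : c = 0 :=
  eq_zero_of_forall_neg_add_mem_quadricCap c fun _ ↦ h.neg_add_mem

theorem card_filter_apply_modEq (h : IsVertex c C) (j : Fin 4) (s t : ZMod 3) :
    (C.filter (· j = s)).card + 2 * (if c j = t then 1 else 0) ≡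
      (C.filter (· j = t)).card + 2 * (if c j = s then 1 else 0) [MOD 9] := by
  obtain ⟨f, rfl, rfl⟩ := h
  have hf (x : Point) : f x j = LinearMap.toMatrix' f.linear j ⬝ᵥ x + f 0 j := by
    have h₁ := congrFun (LinearMap.toMatrix'_mulVec f.linear.toLinearMap x) j
    have h₂ := congrFun (f.map_vadd 0 x) j
    simp only [vadd_eq_add, add_zero, Pi.add_apply] at h₂
    exact h₂.trans (congrArg (· + f 0 j) h₁.symm)
  have hcard (s : ZMod 3) : ((f.toEquiv.finsetCongr quadricCap).filter (· j = s)).card =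
      (quadricCap.filter (LinearMap.toMatrix' f.linear j ⬝ᵥ · = s - f 0 j)).card := by
    rw [Equiv.finsetCongr_apply, Finset.filter_map, Finset.card_map]
    refine congrArg Finset.card (Finset.filter_congr fun x _ ↦ ?_)
    exact eq_sub_iff_add_eq.trans (hf x ▸ Iff.rfl) |>.symm
  have hif (t : ZMod 3) : f 0 j = t ↔ t - f 0 j = 0 := eq_comm.trans sub_eq_zero.symm
  simpa only [hcard, hif] using card_filter_dotProduct_quadricCap_modEq _ (s - f 0 j) (t - f 0 j)

end IsVertex

theorem MaximalCap.exists_isVertex (hC : MaximalCap C) : ∃ c, IsVertex c C :=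
  let ⟨f, hf⟩ := hC.isQuadricCap
  ⟨f 0, f, hf, rfl⟩

theorem card_filter_apply_eq :
    ∀ (j : Fin 4) (t : ZMod 3), ({x | x j = t} : Finset Point).card = 27 := by
  decide +kernel

namespace IsCapPartition

theorem pairwiseDisjoint (hP : IsCapPartition P) : (P : Set (Finset Point)).PairwiseDisjoint id :=
  hP.2.2.1

theorem sum_card_filter_apply (hP : IsCapPartition P) (ha : P.sup id = Finset.univ \ {a})
    (j : Fin 4) (t : ZMod 3) :
    ∑ C ∈ P, (C.filter (· j = t)).card + (if a j = t then 1 else 0) = 27 := by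
  have hunion : P.biUnion (fun C ↦ C.filter (· j = t)) = (Finset.univ \ {a}).filter (· j = t) := by
    rw [← ha, Finset.sup_eq_biUnion, Finset.filter_biUnion]
    rfl
  have hsingle : (if a j = t then 1 else 0) = (({a} : Finset Point).filter (· j = t)).card := by
    rw [Finset.filter_singleton, apply_ite Finset.card, Finset.card_singleton, Finset.card_empty]
  have hdisj : (P : Set (Finset Point)).PairwiseDisjoint fun C ↦ C.filter (· j = t) :=
    hP.pairwiseDisjoint.mono fun C ↦ C.filter_subset _
  rw [← Finset.card_biUnion hdisj, hunion, hsingle,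
    ← Finset.card_union_of_disjoint (Finset.disjoint_filter_filter Finset.sdiff_disjoint),
    ← Finset.filter_union, Finset.sdiff_union_of_subset (Finset.subset_univ _),
    card_filter_apply_eq]

theorem isVertex (hP : IsCapPartition P) (ha : P.sup id = Finset.univ \ {a}) (hC : C ∈ P) :
    IsVertex a C := by
  have hvertex : ∀ C ∈ P, ∃ c, IsVertex c C := fun C hC ↦ (hP.2.1 C hC).exists_isVertex
  choose! c hc using hvertex
  suffices h : ∀ j, ∀ D ∈ P, c D j = a j from funext (fun j ↦ h j C hC) ▸ hc C hC
  intro j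
  have hsum (t : ZMod 3) := hP.sum_card_filter_apply ha j t
  have hmod (s t : ZMod 3) := Nat.ModEq.sum fun D hD ↦ (hc D hD).card_filter_apply_modEq j s t
  simp only [Finset.sum_add_distrib, ← Finset.mul_sum, ← Finset.card_filter] at hmod
  have h₀ : ∑ D ∈ P, (D.filter (· j = a j)).card = 26 := by simpa using hsum (a j)
  have h₁ : ∑ D ∈ P, (D.filter (· j = a j + 1)).card = 27 := by simpa using hsum (a j + 1)
  have hle (t : ZMod 3) : (P.filter (c · j = t)).card ≤ 4 := hP.1 ▸ Finset.card_filter_le _ _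
  have hmod₄ : ∀ k ≤ 4, ∀ l ≤ 4, 26 + 2 * l ≡ 27 + 2 * k [MOD 9] → k = 4 := by decide
  have hcard : (P.filter (c · j = a j)).card = 4 :=
    hmod₄ _ (hle _) _ (hle _) (h₀ ▸ h₁ ▸ hmod (a j) (a j + 1))
  exact Finset.card_filter_eq_iff.1 (hcard.trans hP.1.symm)

theorem sup_eq_of_quadricCap_mem (hP : IsCapPartition P) (hS : quadricCap ∈ P) :
    P.sup id = Finset.univ \ {0} := by
  obtain ⟨a, ha⟩ := hP.2.2.2
  rw [ha, (hP.isVertex ha hS).eq_zero]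

theorem neg_mem_of_quadricCap_mem (hP : IsCapPartition P) (hS : quadricCap ∈ P) (hC : C ∈ P)
    {x : Point} (hx : x ∈ C) : -x ∈ C := by
  simpa using (hP.isVertex (hP.sup_eq_of_quadricCap_mem hS) hC).neg_add_mem hx

theorem eq_of_subset (hP : IsCapPartition P) (hQ : IsCapPartition Q) (hPQ : P.sup id = Q.sup id)
    {T : Finset (Finset Point)} (hTP : T ⊆ P) (hTQ : T ⊆ Q) (hT : T.card = 3) : P = Q := by
  obtain ⟨C, hC⟩ := Finset.card_eq_one.1 <|
    (Finset.card_sdiff_of_subset hTP).trans (by rw [hP.1, hT] : P.card - T.card = 1)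
  obtain ⟨D, hD⟩ := Finset.card_eq_one.1 <|
    (Finset.card_sdiff_of_subset hTQ).trans (by rw [hQ.1, hT] : Q.card - T.card = 1)
  obtain ⟨hCP, hCT⟩ := Finset.mem_sdiff.1 (hC.symm.subset (Finset.mem_singleton_self C))
  have hDQ := (Finset.mem_sdiff.1 (hD.symm.subset (Finset.mem_singleton_self D))).1
  have hCD : C ⊆ D := by
    intro x hx
    obtain ⟨E, hEQ, hxE⟩ := Finset.mem_sup.1 (hPQ ▸ Finset.mem_sup.2 ⟨C, hCP, hx⟩ : x ∈ Q.sup id)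
    by_cases hE : E ∈ T
    · exact absurd hxE <| Finset.disjoint_left.1
        (hP.2.2.1 C hCP E (hTP hE) (ne_of_mem_of_not_mem hE hCT).symm) hx
    · exact Finset.mem_singleton.1 (hD ▸ Finset.mem_sdiff.2 ⟨hEQ, hE⟩) ▸ hxE
  have hCD : C = D := Finset.eq_of_subset_of_card_le hCD ((hP.2.1 C hCP).2 D (hQ.2.1 D hDQ).1)
  rw [← Finset.sdiff_union_of_subset hTP, ← Finset.sdiff_union_of_subset hTQ, hC, hD, hCD]

end IsCapPartition

theorem isCapPartition_iff : IsCapPartition P ↔ P.card = 4 ∧ (∀ C ∈ P, MaximalCap C) ∧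
    (P : Set (Finset Point)).PairwiseDisjoint id := by
  refine ⟨fun h ↦ ⟨h.1, h.2.1, h.2.2.1⟩, fun ⟨hcard, hmax, hdisj⟩ ↦ ⟨hcard, hmax, hdisj, ?_⟩⟩
  have hsup : (P.sup id).card = 80 := by
    rw [Finset.sup_eq_biUnion, Finset.card_biUnion hdisj]
    exact (Finset.sum_const_nat fun C hC ↦ (maximalCap_iff.1 (hmax C hC)).2).trans (by rw [hcard])
  obtain ⟨a, ha⟩ := Finset.card_eq_one.1 <| (Finset.card_compl (P.sup id)).trans
    (by rw [hsup]; simp : Fintype.card Point - (P.sup id).card = 1)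
  exact ⟨a, by rw [← Finset.compl_eq_univ_sdiff, ← ha, compl_compl]⟩

theorem MaximalCap.ne_of_disjoint {A B : Finset Point} (hA : MaximalCap A) (hAB : Disjoint A B) :
    A ≠ B :=
  hAB.ne fun h ↦ by simpa [h] using (maximalCap_iff.1 hA).2

theorem isCapPartition_of_disjoint {A B C D : Finset Point} (hA : MaximalCap A) (hB : MaximalCap B)
    (hC : MaximalCap C) (hD : MaximalCap D) (hAB : Disjoint A B) (hAC : Disjoint A C)
    (hAD : Disjoint A D) (hBC : Disjoint B C) (hBD : Disjoint B D) (hCD : Disjoint C D) :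
    IsCapPartition {A, B, C, D} := by
  refine isCapPartition_iff.2 ⟨?_, by simp [*], ?_⟩
  · simp [hA.ne_of_disjoint, hB.ne_of_disjoint, hC.ne_of_disjoint, *]
  · simp [Set.pairwiseDisjoint_insert, *]

theorem isCapPartition_finsetCongr_iff (f : Point ≃ᵃ[ZMod 3] Point) :
    IsCapPartition (f.toEquiv.finsetCongr.finsetCongr P) ↔ IsCapPartition P := by
  rw [isCapPartition_iff, isCapPartition_iff, Equiv.finsetCongr_apply, Finset.card_map,
    Finset.forall_mem_map, Finset.coe_map,
    Equiv.coe_toEmbedding, f.toEquiv.finsetCongr.injective.injOn.pairwiseDisjoint_image]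
  refine and_congr_right' (and_congr (forall₂_congr fun _ _ ↦ maximalCap_finsetCongr_iff f) ?_)
  simp only [Set.PairwiseDisjoint, Set.Pairwise, Function.onFun, Function.comp_apply, id,
    Equiv.finsetCongr_apply, Finset.disjoint_map]

/-- The number of cap-partitions containing both `S` and `A`. -/
noncomputable def completionCount (S A : Finset Point) : ℕ :=
  Nat.card {P : Finset (Finset Point) // IsCapPartition P ∧ S ∈ P ∧ A ∈ P}

theorem completionCount_finsetCongr (f : Point ≃ᵃ[ZMod 3] Point) (S A : Finset Point) :
    completionCount (f.toEquiv.finsetCongr S) (f.toEquiv.finsetCongr A) = completionCount S A := by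
  refine (Nat.card_congr (f.toEquiv.finsetCongr.finsetCongr.subtypeEquiv fun P ↦ ?_)).symm
  rw [isCapPartition_finsetCongr_iff, Equiv.finsetCongr_apply _ P]
  simp only [Finset.mem_map_equiv, Equiv.symm_apply_apply]

theorem card_mul_two_eq_card_sup_sdiff {A : Finset Point} (hA : A ≠ quadricCap)
    {F : Finset (Finset (Finset Point))}
    (hF : ∀ P ∈ F, IsCapPartition P ∧ quadricCap ∈ P ∧ A ∈ P) :
    F.card * 2 = (F.sup id \ {quadricCap, A}).card := by
  rw [← mul_one (F.sup id \ _).card]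
  refine Finset.card_mul_eq_card_mul (fun P B ↦ B ∈ P) (fun P hP ↦ ?_) fun B hB ↦ ?_
  · obtain ⟨hP', hS, hAP⟩ := hF P hP
    have hPA : (F.sup id \ {quadricCap, A}).bipartiteAbove (fun P B ↦ B ∈ P) P =
        P \ {quadricCap, A} := by
      ext B
      simp only [Finset.mem_bipartiteAbove, Finset.mem_sdiff, and_right_comm, Finset.mem_sup]
      exact and_congr_left fun _ ↦ and_iff_right_of_imp fun hB ↦ ⟨P, hP, hB⟩
    have hsub := Finset.insert_subset hS (Finset.singleton_subset_iff.2 hAP)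
    rw [hPA, Finset.card_sdiff_of_subset hsub, hP'.1, Finset.card_pair hA.symm]
  · obtain ⟨hB, hBA⟩ := Finset.mem_sdiff.1 hB
    obtain ⟨P, hP, hBP⟩ := Finset.mem_sup.1 hB
    refine Finset.card_eq_one.2 ⟨P, Finset.eq_singleton_iff_unique_mem.2
      ⟨(Finset.mem_bipartiteBelow _).2 ⟨hP, hBP⟩, fun Q hQ ↦ ?_⟩⟩
    obtain ⟨hQ, hBQ⟩ := (Finset.mem_bipartiteBelow _).1 hQ
    obtain ⟨hP, hSP, hAP⟩ := hF P hP
    obtain ⟨hQ, hSQ, hAQ⟩ := hF Q hQ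
    refine hQ.eq_of_subset hP (T := {B, quadricCap, A}) ?_ ?_ ?_ ?_
    · rw [hQ.sup_eq_of_quadricCap_mem hSQ, hP.sup_eq_of_quadricCap_mem hSP]
    · exact Finset.insert_subset hBQ (Finset.insert_subset hSQ (Finset.singleton_subset_iff.2 hAQ))
    · exact Finset.insert_subset hBP (Finset.insert_subset hSP (Finset.singleton_subset_iff.2 hAP))
    · rw [Finset.card_insert_of_notMem hBA, Finset.card_pair hA.symm]

end Partition

section Companion

/-- `forceList l f` is `f l`, set up so that the kernel evaluates the entries of `l` to numerals
before entering `f`. -/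
def forceList {α : Type} : List ℕ → (List ℕ → α) → α
  | [], f => f []
  | n :: l, f => force n fun n ↦ forceList l fun l ↦ f (n :: l)

theorem forceList_eq {α : Type} (l : List ℕ) (f : List ℕ → α) : forceList l f = f l := by
  induction l generalizing f with
  | nil => rfl
  | cons n l ih => exact (force_eq n _).trans (ih _)

theorem of_forceList_decide {p : List ℕ → Prop} [DecidablePred p] {l : List ℕ}
    (h : forceList l (fun l ↦ decide (p l)) = true) : p l := by
  rwa [forceList_eq, decide_eq_true_iff] at h

/-- The points of the set with a given mask. -/
def unmask (m : ℕ) : List Point := points.filter fun x ↦ m.testBit (code x)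

theorem nodup_unmask (m : ℕ) : (unmask m).Nodup :=
  (by decide +kernel : points.Nodup).filter _

/-- The number of masks in `l` of sets disjoint from the set with mask `m`. -/
def maskDegree (l : List ℕ) (m : ℕ) : ℕ := l.countP fun k ↦ Nat.beq (m &&& k) 0

/-- The list `l` consists of masks of caps of size `20` disjoint from `quadricCap`. In the graph on
`l` joining the masks of disjoint caps, all degrees are `12`, `4` or `2`, and each edge lies in a
triangle with degree sum `26` or `28`. -/
structure IsCompanionTable (l : List ℕ) : Prop where
  nodup : l.Nodup
  sum_unmask : ∀ m ∈ l, ((unmask m).map (2 ^ code ·)).sum = m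
  mod_eq : ∀ m ∈ l, m % 127 = 20
  and_mask_quadricCap : ∀ m ∈ l, m &&& mask quadricCap = 0
  pairwise_unmask : ∀ m ∈ l, (unmask m).Pairwise fun x y ↦ m &&& sumMask x >>> code y = 0
  maskDegree_mem : ∀ m ∈ l, maskDegree l m ∈ [12, 4, 2]
  exists_triangle : ∀ m₁ ∈ l, ∀ m₂ ∈ l, m₁ &&& m₂ = 0 → ∃ m₃ ∈ l, m₁ &&& m₃ = 0 ∧ m₂ &&& m₃ = 0 ∧
    maskDegree l m₁ + maskDegree l m₂ + maskDegree l m₃ ∈ [26, 28]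

instance (l : List ℕ) : Decidable (IsCompanionTable l) :=
  decidable_of_iff (_ ∧ _ ∧ _ ∧ _ ∧ _ ∧ _ ∧ _)
    ⟨fun ⟨h₁, h₂, h₃, h₄, h₅, h₆, h₇⟩ ↦ ⟨h₁, h₂, h₃, h₄, h₅, h₆, h₇⟩,
      fun ⟨h₁, h₂, h₃, h₄, h₅, h₆, h₇⟩ ↦ ⟨h₁, h₂, h₃, h₄, h₅, h₆, h₇⟩⟩

/-- The masks of the caps that can occur together with `quadricCap` in a cap-partition: those of
size `20` that are symmetric about `0` and disjoint from `quadricCap`. -/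
def companionMasks : List ℕ :=
  capSearch 20 (points.reverse.map fun x ↦ [x, -x]) {x | x ≠ 0 ∧ x ∉ quadricCap} []

theorem isCompanionTable_companionMasks : IsCompanionTable companionMasks := by
  apply of_forceList_decide
  decide +kernel

variable {l : List ℕ} {m : ℕ} {A B C : Finset Point} {P Q : Finset (Finset Point)}

theorem mem_unmask_mask {x : Point} : x ∈ unmask (mask C) ↔ x ∈ C := by
  rw [unmask, List.mem_filter, and_iff_right (mem_points x), testBit_mask_code]

namespace IsCompanionTable

theorem exists_mask_eq (h : IsCompanionTable l) (hm : m ∈ l) : ∃ C, mask C = m :=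
  ⟨(unmask m).toFinset, by
    rw [mask, List.sum_toFinset _ (nodup_unmask m), h.sum_unmask m hm]⟩

theorem maximalCap (h : IsCompanionTable l) (hC : mask C ∈ l) : MaximalCap C := by
  refine maximalCap_iff.2 ⟨isCap_iff_neg_add_notMem.2 fun x hx y hy hxy hz ↦ ?_,
    (mask_mod_eq_card C).symm.trans (h.mod_eq _ hC)⟩
  have hsymm : Std.Symm fun x y : Point ↦ -(x + y) ∉ C := ⟨fun x y h ↦ add_comm x y ▸ h⟩
  suffices hpair : (unmask (mask C)).Pairwise fun x y ↦ -(x + y) ∉ C from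
    hpair.forall (mem_unmask_mask.2 hx) (mem_unmask_mask.2 hy) hxy hz
  refine (h.pairwise_unmask _ hC).imp fun {x y} hxy hz ↦ ?_
  have hbit := congrArg (·.testBit (code (-(x + y)))) hxy
  rw [Nat.testBit_and, Nat.testBit_shiftRight, testBit_mask_code.2 hz, testBit_sumMask.2] at hbit
  · simp at hbit
  · abel

theorem disjoint_quadricCap (h : IsCompanionTable l) (hC : mask C ∈ l) : Disjoint C quadricCap :=
  mask_and_eq_zero_iff.1 (h.and_mask_quadricCap _ hC)

theorem ne_quadricCap (h : IsCompanionTable l) (hC : mask C ∈ l) : C ≠ quadricCap :=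
  (h.maximalCap hC).ne_of_disjoint (h.disjoint_quadricCap hC)

theorem exists_isCapPartition (h : IsCompanionTable l) (hA : mask A ∈ l) (hB : mask B ∈ l)
    (hAB : Disjoint A B) : ∃ C, IsCapPartition {quadricCap, A, B, C} ∧
      maskDegree l (mask A) + maskDegree l (mask B) + maskDegree l (mask C) ∈ [26, 28] := by
  obtain ⟨m, hm, hAC, hBC, hdeg⟩ := h.exists_triangle _ hA _ hB (mask_and_eq_zero_iff.2 hAB)
  obtain ⟨C, rfl⟩ := h.exists_mask_eq hm
  rw [mask_and_eq_zero_iff] at hAC hBC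
  have hS := maximalCap_iff.2 ⟨isCap_quadricCap, card_quadricCap⟩
  exact ⟨C, isCapPartition_of_disjoint hS (h.maximalCap hA) (h.maximalCap hB) (h.maximalCap hm)
    (h.disjoint_quadricCap hA).symm (h.disjoint_quadricCap hB).symm
    (h.disjoint_quadricCap hm).symm hAB hAC hBC, hdeg⟩

end IsCompanionTable

theorem mask_mem_companionMasks (hP : IsCapPartition P) (hS : quadricCap ∈ P) (hC : C ∈ P)
    (hne : C ≠ quadricCap) : mask C ∈ companionMasks := by
  obtain ⟨hcap, hcard⟩ := maximalCap_iff.1 (hP.2.1 C hC)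
  have hneg {x : Point} : -x ∈ C ↔ x ∈ C :=
    ⟨fun hx ↦ neg_neg x ▸ hP.neg_mem_of_quadricCap_mem hS hC hx,
      hP.neg_mem_of_quadricCap_mem hS hC⟩
  refine mask_mem_capSearch hcap hcard (fun B hB ↦ ?_) (fun x _ ↦ ?_) (fun x hx ↦ ?_) nofun
  · obtain ⟨x, -, rfl⟩ := List.mem_map.1 hB
    simpa only [List.forall_mem_cons, List.not_mem_nil, hneg, and_self, false_imp_iff,
      implies_true, and_true] using em (x ∈ C)
  · exact ⟨[x, -x], List.mem_map_of_mem (List.mem_reverse.2 (mem_points x)), List.mem_cons_self⟩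
  · have hx₀ : x ∈ Finset.univ \ {0} :=
      hP.sup_eq_of_quadricCap_mem hS ▸ Finset.mem_sup.2 ⟨C, hC, hx⟩
    exact Finset.mem_filter.2 ⟨Finset.mem_univ x, by simpa using hx₀,
      Finset.disjoint_left.1 (hP.pairwiseDisjoint hC hS hne) hx⟩

theorem completionCount_quadricCap_mul_two (hA : mask A ∈ companionMasks) :
    completionCount quadricCap A * 2 = maskDegree companionMasks (mask A) := by
  have htable := isCompanionTable_companionMasks
  have hne := htable.ne_quadricCap hA
  set F : Finset (Finset (Finset Point)) :=
    (Set.toFinite {P | IsCapPartition P ∧ quadricCap ∈ P ∧ A ∈ P}).toFinset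
  have hmem {P} : P ∈ F ↔ IsCapPartition P ∧ quadricCap ∈ P ∧ A ∈ P := Set.Finite.mem_toFinset _
  rw [completionCount, Nat.subtype_card F fun _ ↦ hmem,
    card_mul_two_eq_card_sup_sdiff hne fun _ ↦ hmem.1,
    ← Finset.card_image_of_injective _ mask_injective, maskDegree, List.countP_eq_length_filter,
    ← List.toFinset_card_of_nodup (htable.nodup.filter _)]
  refine congrArg Finset.card (Finset.ext fun m ↦ ?_)
  simp only [Finset.mem_image, Finset.mem_sdiff, Finset.mem_insert, Finset.mem_singleton, not_or,
    Finset.mem_sup, hmem, id, List.mem_toFinset, List.mem_filter, Nat.beq_eq]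
  constructor
  · rintro ⟨B, ⟨⟨P, ⟨hP, hSP, hAP⟩, hBP⟩, hBS, hBA⟩, rfl⟩
    exact ⟨mask_mem_companionMasks hP hSP hBP hBS,
      mask_and_eq_zero_iff.2 (hP.pairwiseDisjoint hAP hBP (Ne.symm hBA))⟩
  · rintro ⟨hm, hAm⟩
    obtain ⟨B, rfl⟩ := htable.exists_mask_eq hm
    have hAB := mask_and_eq_zero_iff.1 hAm
    obtain ⟨C, hP, -⟩ := htable.exists_isCapPartition hA hm hAB
    exact ⟨B, ⟨⟨_, ⟨hP, by grind, by grind⟩, by grind⟩, htable.ne_quadricCap hm,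
      ((htable.maximalCap hA).ne_of_disjoint hAB).symm⟩, rfl⟩

theorem completionCount_quadricCap_mem (hA : mask A ∈ companionMasks) :
    completionCount quadricCap A ∈ [6, 2, 1] := by
  have h := completionCount_quadricCap_mul_two hA ▸
    isCompanionTable_companionMasks.maskDegree_mem _ hA
  simp only [List.mem_cons, List.not_mem_nil, or_false] at h ⊢
  omega

theorem completionCount_quadricCap_add_mem (hQ : IsCapPartition {quadricCap, A, B, C})
    (hA : mask A ∈ companionMasks) (hB : mask B ∈ companionMasks) (hC : mask C ∈ companionMasks)
    (hAB : Disjoint A B) (hCA : C ≠ A) (hCB : C ≠ B) :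
    completionCount quadricCap A + completionCount quadricCap B + completionCount quadricCap C ∈
      [13, 14] := by
  have htable := isCompanionTable_companionMasks
  obtain ⟨D, hP, hdeg⟩ := htable.exists_isCapPartition hA hB hAB
  have hPQ : ({quadricCap, A, B, D} : Finset (Finset Point)) = {quadricCap, A, B, C} := by
    refine hP.eq_of_subset hQ (T := {quadricCap, A, B}) ?_ (by grind) (by grind) ?_
    · rw [hP.sup_eq_of_quadricCap_mem (by grind), hQ.sup_eq_of_quadricCap_mem (by grind)]
    · exact Finset.card_eq_three.2 ⟨_, _, _, (htable.ne_quadricCap hA).symm,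
        (htable.ne_quadricCap hB).symm, (htable.maximalCap hA).ne_of_disjoint hAB, rfl⟩
  have hCD : C = D := by
    have hmem : C ∈ ({quadricCap, A, B, D} : Finset (Finset Point)) := hPQ ▸ by simp
    simpa only [Finset.mem_insert, Finset.mem_singleton, htable.ne_quadricCap hC, hCA, hCB,
      false_or] using hmem
  rw [← hCD, ← completionCount_quadricCap_mul_two hA, ← completionCount_quadricCap_mul_two hB,
    ← completionCount_quadricCap_mul_two hC] at hdeg
  simp only [List.mem_cons, List.not_mem_nil, or_false] at hdeg ⊢
  omega

theorem IsCapPartition.exists_completionCount_quadricCap (hQ : IsCapPartition Q)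
    (hS : quadricCap ∈ Q) : ∃ A B C, Q = {quadricCap, A, B, C} ∧
      completionCount quadricCap A = 6 ∧ completionCount quadricCap B = 6 ∧
      (completionCount quadricCap C = 1 ∨ completionCount quadricCap C = 2) := by
  obtain ⟨A, B, C, hAB, hAC, hBC, hQS⟩ := Finset.card_eq_three.1 <|
    (Finset.card_erase_of_mem hS).trans (by rw [hQ.1] : Q.card - 1 = 3)
  have hmem {D} (hD : D ∈ ({A, B, C} : Finset (Finset Point))) : mask D ∈ companionMasks :=
    have hD := Finset.mem_erase.1 (hQS ▸ hD)
    mask_mem_companionMasks hQ hS hD.2 hD.1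
  have hA : mask A ∈ companionMasks := hmem (by simp)
  have hB : mask B ∈ companionMasks := hmem (by simp)
  have hC : mask C ∈ companionMasks := hmem (by simp)
  obtain rfl : Q = {quadricCap, A, B, C} := by rw [← hQS, Finset.insert_erase hS]
  have hsum := completionCount_quadricCap_add_mem hQ hA hB hC
    (hQ.pairwiseDisjoint (by grind) (by grind) hAB) hAC.symm hBC.symm
  have hA := completionCount_quadricCap_mem hA
  have hB := completionCount_quadricCap_mem hB
  have hC := completionCount_quadricCap_mem hC
  simp only [List.mem_cons, List.not_mem_nil, or_false] at hA hB hC hsum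
  rcases hA with hA | hA
  · rcases hB with hB | hB
    · exact ⟨A, B, C, rfl, hA, hB, by omega⟩
    · exact ⟨A, C, B, by rw [Finset.pair_comm B C], hA, by omega, by omega⟩
  · exact ⟨B, C, A, by grind, by omega, by omega, by omega⟩

end Companion

/-- In any cap-partition `Q` containing a maximal cap `S`, exactly two of the other three
caps lie in exactly six cap-partitions containing `S` (they are S-6-completable), and the
remaining one lies in exactly one or exactly two cap-partitions containing `S`. -/
theorem cap_partition_structure_AG43
    (S : Finset (Fin 4 → ZMod 3)) (hS : MaximalCap S)
    (Q : Finset (Finset (Fin 4 → ZMod 3))) (hQ : IsCapPartition Q) (hSQ : S ∈ Q) :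
    ∃ A B C : Finset (Fin 4 → ZMod 3),
      Q = {S, A, B, C} ∧
      Nat.card {P : Finset (Finset (Fin 4 → ZMod 3)) //
        IsCapPartition P ∧ S ∈ P ∧ A ∈ P} = 6 ∧
      Nat.card {P : Finset (Finset (Fin 4 → ZMod 3)) //
        IsCapPartition P ∧ S ∈ P ∧ B ∈ P} = 6 ∧
      (Nat.card {P : Finset (Finset (Fin 4 → ZMod 3)) //
        IsCapPartition P ∧ S ∈ P ∧ C ∈ P} = 1 ∨
       Nat.card {P : Finset (Finset (Fin 4 → ZMod 3)) //
        IsCapPartition P ∧ S ∈ P ∧ C ∈ P} = 2) := by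
  obtain ⟨f, rfl⟩ := hS.isQuadricCap
  obtain ⟨Q, rfl⟩ := f.toEquiv.finsetCongr.finsetCongr.surjective Q
  rw [isCapPartition_finsetCongr_iff] at hQ
  rw [Equiv.finsetCongr_apply _ Q, Finset.mem_map_equiv, Equiv.symm_apply_apply] at hSQ
  obtain ⟨A, B, C, rfl, hA, hB, hC⟩ := hQ.exists_completionCount_quadricCap hSQ
  rw [← completionCount_finsetCongr f] at hA hB
  rw [← completionCount_finsetCongr f quadricCap C] at hC
  exact ⟨_, _, _, by simp only [Equiv.finsetCongr_apply, Finset.map_insert, Finset.map_singleton,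
    Equiv.coe_toEmbedding], hA, hB, hC⟩
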